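/- Let ℓ, p, q be distinct primes such that q ≡ 8 (mod 9) and {ℓ mod 9, p mod 9} = {2, 5}. Let K = ℚ(β) be the cubic field obtained by adjoining to ℚ a root β of X³ − ℓ²/p. Then there exists ε ∈ K with Norm_{K/ℚ}(ε) = p·q. -/

import Mathlib

open Ideal in
structure CubicSetup {O : Type*} [CommRing O] [IsDedekindDomain O] [Module.Free ℤ O]
    [Module.Finite ℤ O] (s : O ≃+* O) (w θ t : O) (l p : ℕ) : Prop where
  s3 : ∀ x, s (s (s x)) = x
  hw : w ^ 2 + w + 1 = 0
  sw : s w = w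
  hθ : θ ^ 3 = (l : O) * p
  sθ : s θ = w * θ
  ht : (1 - w) * t = θ - 1
  hl : l.Prime
  hp : p.Prime
  hl9 : l % 9 = 2 ∨ l % 9 = 5
  hp9 : p % 9 = 2 ∨ p % 9 = 5
  hlp : l ≠ p
  gen : ∀ J : Ideal O, J ≠ ⊥ → J.map s = J →
    ∃ g, g ≠ 0 ∧ s g = g ∧ g ∈ J ∧ ∀ x ∈ J, s x = x → g ∣ x
  units : ∀ u : O, IsUnit u → s u = u → ∃ i : ℕ, u = w ^ i ∨ u = - w ^ i
  card : ∀ r : ℕ, absNorm (span {(r : O)}) = r ^ 6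
  bigunit : ∃ η : O, IsUnit η ∧ ∀ v : O, IsUnit v → ∀ i : ℕ, η ≠ w ^ i * v ^ 3 ∧ η ≠ - (w ^ i * v ^ 3)

set_option linter.unusedSectionVars false

namespace CubicSetup
open Ideal

theorem finfield {F : Type*} [Field F] [Finite F] (τ : F →+* F) (w y : F) (m : ℕ)
    (hm : m % 3 ≠ 0) (hc : Nat.card F = 3 * m + 1) (hw : w ^ 3 = 1) (hw1 : w ≠ 1)
    (hτ : τ w = w) (hy : y * τ y * τ (τ y) = w) : False := by
  have hw0 : w ≠ 0 := by rintro rfl; simp at hw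
  have hy0 : y ≠ 0 := by rintro rfl; simp at hy; exact hw0 hy.symm
  have := Fintype.ofFinite F
  obtain ⟨j, hj⟩ := MonoidHom.map_cyclic (Units.map (τ : F →* F))
  have hj' : ∀ g : F, g ≠ 0 → τ g = g ^ j := by
    intro g hg
    have := congrArg Units.val (hj (Units.mk0 g hg))
    simpa using this
  have hcard : ∀ g : F, g ≠ 0 → g ^ (3 * m) = 1 := by
    intro g hg
    have := FiniteField.pow_card_sub_one_eq_one g hg
    rwa [← Nat.card_eq_fintype_card, hc, Nat.add_sub_cancel] at this
  have ho : orderOf w = 3 := orderOf_eq_prime hw hw1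
  have ho' : orderOf (Units.mk0 w hw0) = 3 := by rw [← orderOf_units]; simpa using ho
  have h1 : (Units.mk0 w hw0) ^ (j - 1) = 1 := by
    ext
    have := hj' w hw0
    rw [hτ] at this
    simp only [Units.val_zpow_eq_zpow_val, Units.val_mk0, Units.val_one]
    rw [zpow_sub_one₀ hw0, ← this, mul_inv_cancel₀ hw0]
  have h2 : (3 : ℤ) ∣ j - 1 := by
    have := orderOf_dvd_iff_zpow_eq_one.mpr h1
    rwa [ho'] at this
  obtain ⟨c, hcj⟩ := h2
  have hj2 : j = 3 * c + 1 := by omega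
  have hy1 : τ y ≠ 0 := by rw [hj' y hy0]; exact zpow_ne_zero _ hy0
  rw [hj' _ hy1, hj' y hy0, ← zpow_mul] at hy
  nth_rewrite 1 [← zpow_one y] at hy
  rw [← zpow_add₀ hy0, ← zpow_add₀ hy0] at hy
  have e : 1 + j + j * j = 3 * (3 * c ^ 2 + 3 * c + 1) := by rw [hj2]; ring
  have h3 : w ^ m = 1 := by
    rw [← hy, e, ← zpow_natCast, ← zpow_mul,
      show 3 * (3 * c ^ 2 + 3 * c + 1) * (m : ℤ) = ((3 * m : ℕ) : ℤ) * (3 * c ^ 2 + 3 * c + 1) by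
        push_cast; ring, zpow_mul, zpow_natCast, hcard y hy0, one_zpow]
  have := orderOf_dvd_of_pow_eq_one h3
  rw [ho] at this
  omega

variable {O : Type*} [CommRing O] [IsDedekindDomain O] [Module.Free ℤ O]
    [Module.Finite ℤ O] {s : O ≃+* O} {w θ t : O} {l p : ℕ}

def Pr (I : Ideal O) : Prop := ∃ a, I = span {a}

theorem Pr.mul {I J : Ideal O} (h : Pr I) (h' : Pr J) : Pr (I * J) := by
  obtain ⟨a, rfl⟩ := h
  obtain ⟨b, rfl⟩ := h'
  exact ⟨a * b, span_singleton_mul_span_singleton a b⟩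

theorem Pr.pow {I : Ideal O} (h : Pr I) (n : ℕ) : Pr (I ^ n) := by
  obtain ⟨a, rfl⟩ := h
  exact ⟨a ^ n, span_singleton_pow a n⟩

theorem Pr.map {I : Ideal O} (h : Pr I) : Pr (I.map s) := by
  obtain ⟨a, rfl⟩ := h
  exact ⟨s a, by rw [Ideal.map_span, Set.image_singleton]⟩

theorem Pr.cancel {I J : Ideal O} (h : Pr I) (h' : Pr (I * J)) (hI : I ≠ ⊥) : Pr J := by
  obtain ⟨a, rfl⟩ := h
  obtain ⟨b, hb⟩ := h'
  have ha : a ≠ 0 := by rintro rfl; simp at hI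
  have : b ∈ span {a} * J := by rw [hb]; exact mem_span_singleton_self b
  obtain ⟨c, hc, rfl⟩ := mem_span_singleton_mul.mp this
  refine ⟨c, ?_⟩
  rw [← span_singleton_mul_span_singleton] at hb
  exact mul_left_cancel₀ (by simpa using ha) hb


theorem symm' (S : CubicSetup s w θ t l p) : CubicSetup s w θ t p l where
  s3 := S.s3
  hw := S.hw
  sw := S.sw
  hθ := by rw [S.hθ, mul_comm]
  sθ := S.sθ
  ht := S.ht
  hl := S.hp
  hp := S.hl
  hl9 := S.hp9
  hp9 := S.hl9
  hlp := S.hlp.symm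
  gen := S.gen
  units := S.units
  card := S.card
  bigunit := S.bigunit

theorem w3 (S : CubicSetup s w θ t l p) : w ^ 3 = 1 := by linear_combination (w - 1) * S.hw

theorem cast_ne (S : CubicSetup s w θ t l p) (r : ℕ) (hr : r ≠ 0) : (r : O) ≠ 0 := by
  intro h
  have := S.card r
  rw [h] at this
  simp at this
  exact hr (pow_eq_zero_iff (by norm_num) |>.mp this.symm)

theorem θ0 (S : CubicSetup s w θ t l p) : θ ≠ 0 := by
  intro h
  have := S.hθ
  rw [h] at this
  have h1 := S.cast_ne _ S.hl.ne_zero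
  have h2 := S.cast_ne _ S.hp.ne_zero
  exact mul_ne_zero h1 h2 (by rw [← this]; ring)

theorem sl (S : CubicSetup s w θ t l p) (I : Ideal O) : ((I.map s).map s).map s = I := by
  ext x
  simp only [mem_map_of_equiv]
  constructor
  · rintro ⟨_, ⟨_, ⟨z, hz, rfl⟩, rfl⟩, rfl⟩
    rwa [S.s3]
  · intro hx
    exact ⟨_, ⟨_, ⟨x, hx, rfl⟩, rfl⟩, S.s3 x⟩

theorem span_coprime (S : CubicSetup s w θ t l p) (a b : ℕ) (h : Nat.Coprime a b) (I : Ideal O) (x : O)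
    (ha : x * a ∈ I) (hb : x * b ∈ I) : x ∈ I := by
  have := Nat.isCoprime_iff_coprime.mpr h
  obtain ⟨u, v, huv⟩ := this
  have h2 : x = (u : O) * (x * a) + (v : O) * (x * b) := by
    have : ((u * a + v * b : ℤ) : O) = 1 := by rw [huv]; simp
    push_cast at this
    linear_combination -x * this
  rw [h2]
  exact I.add_mem (I.mul_mem_left _ ha) (I.mul_mem_left _ hb)

theorem cube (S : CubicSetup s w θ t l p) : (span {θ, (l : O)}) ^ 3 = span {(l : O)} := by
  have hlp := (Nat.coprime_primes S.hl S.hp).mpr S.hlp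
  apply le_antisymm
  · rw [show (3 : ℕ) = 2 + 1 from rfl, pow_succ, pow_two, span_pair_mul_span_pair, span_mul_span',
      span_le]
    intro x hx
    simp only [Set.mem_mul, Set.mem_insert_iff, Set.mem_singleton_iff] at hx
    rw [SetLike.mem_coe, mem_span_singleton]
    have h3 : θ * θ * θ = (l : O) * p := by rw [← S.hθ]; ring
    rcases hx with ⟨a, ha, b, hb, rfl⟩
    rcases hb with rfl | rfl
    · rcases ha with rfl | rfl | rfl | rfl
      · rw [h3]; exact dvd_mul_right _ _
      · exact ⟨b * b, by ring⟩
      · exact ⟨b * b, by ring⟩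
      · exact ⟨l * b, by ring⟩
    · exact dvd_mul_left _ _
  · rw [span_singleton_le_iff_mem]
    have m1 : θ ∈ span {θ, (l : O)} := subset_span (by simp)
    have m2 : (l : O) ∈ span {θ, (l : O)} := subset_span (by simp)
    apply S.span_coprime (l ^ 2) p (hlp.pow_left 2)
    · have := pow_mem_pow m2 3
      convert this using 1
      push_cast; ring
    · have := pow_mem_pow m1 3
      rwa [S.hθ] at this

theorem mulθ (S : CubicSetup s w θ t l p) : span {θ, (l : O)} * span {θ, (p : O)} = span {θ} := by
  have hlp := (Nat.coprime_primes S.hl S.hp).mpr S.hlp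
  have m1 : θ ∈ span {θ, (l : O)} := subset_span (by simp)
  have m2 : (l : O) ∈ span {θ, (l : O)} := subset_span (by simp)
  have m3 : θ ∈ span {θ, (p : O)} := subset_span (by simp)
  have m4 : (p : O) ∈ span {θ, (p : O)} := subset_span (by simp)
  apply le_antisymm
  · rw [span_pair_mul_span_pair, span_le]
    intro x hx
    simp only [Set.mem_insert_iff, Set.mem_singleton_iff] at hx
    rw [SetLike.mem_coe, mem_span_singleton]
    rcases hx with rfl | rfl | rfl | rfl
    · exact dvd_mul_right _ _
    · exact dvd_mul_right _ _
    · exact dvd_mul_left _ _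
    · rw [← S.hθ]; exact dvd_pow_self _ (by norm_num)
  · rw [span_singleton_le_iff_mem]
    apply S.span_coprime l p hlp
    · rw [mul_comm θ]; exact mul_mem_mul m2 m3
    · exact mul_mem_mul m1 m4

theorem normL (S : CubicSetup s w θ t l p) : absNorm (span {θ, (l : O)}) = l ^ 2 := by
  have := congrArg absNorm S.cube
  rw [map_pow, S.card, show l ^ 6 = (l ^ 2) ^ 3 by ring] at this
  exact Nat.pow_left_injective (n := 3) (by norm_num) this

theorem mapL (S : CubicSetup s w θ t l p) : (span {θ, (l : O)}).map s = span {θ, (l : O)} := by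
  rw [Ideal.map_span, Set.image_pair, S.sθ, map_natCast]
  apply le_antisymm
  · rw [span_le, Set.insert_subset_iff, Set.singleton_subset_iff]
    exact ⟨mul_mem_left _ _ (subset_span (by simp)), subset_span (by simp)⟩
  · rw [span_le, Set.insert_subset_iff, Set.singleton_subset_iff]
    refine ⟨?_, subset_span (by simp)⟩
    have : θ = w ^ 2 * (w * θ) := by linear_combination -θ * S.w3
    have h2 : w * θ ∈ span {w * θ, (l : O)} := subset_span (by simp)
    have h3 := mul_mem_left _ (w ^ 2) h2
    rwa [← this] at h3

/-- 1 - w is not in an ideal containing l. -/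
theorem w_notin (S : CubicSetup s w θ t l p) (P : Ideal O) (hP : P ≠ ⊤) (h : (l : O) ∈ P) : 1 - w ∉ P := by
  intro h1
  have h3 : (3 : O) ∈ P := by
    have : (3 : O) = (2 + w) * (1 - w) := by linear_combination S.hw
    rw [this]; exact mul_mem_left _ _ h1
  apply hP
  rw [eq_top_iff_one]
  apply S.span_coprime l 3
  · rw [Nat.coprime_primes S.hl Nat.prime_three]
    have := S.hl9; omega
  · simpa using h
  · simpa using h3

theorem primeL (S : CubicSetup s w θ t l p) : (span {θ, (l : O)}).IsPrime := by
  set I := span {θ, (l : O)} with hI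
  have hlI : (l : O) ∈ I := subset_span (by simp)
  have hl1 := S.hl.one_lt
  have hne : I ≠ ⊤ := by
    intro h
    have := S.normL
    rw [← hI, h, absNorm_top] at this
    nlinarith
  obtain ⟨P, hP, hIP⟩ := exists_le_maximal I hne
  obtain ⟨Q, hQ⟩ := dvd_iff_le.mpr hIP
  have hn : absNorm P * absNorm Q = l ^ 2 := by rw [← S.normL, ← hI, hQ, map_mul]
  have hwP := S.w_notin P hP.ne_top (hIP hlI)
  obtain ⟨i, hi, hPi⟩ := (Nat.dvd_prime_pow S.hl).mp ⟨_, hn.symm⟩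
  have hlpos := S.hl.pos
  interval_cases i
  · exact absurd (absNorm_eq_one_iff.mp (by simpa using hPi)) hP.ne_top
  · exfalso
    let _ := Ideal.Quotient.field P
    have hc : Nat.card (O ⧸ P) = l := by
      have := absNorm_apply P
      rw [hPi, pow_one] at this
      rw [this]; rfl
    have : Finite (O ⧸ P) := Nat.finite_of_card_ne_zero (by rw [hc]; exact S.hl.ne_zero)
    have := Fintype.ofFinite (O ⧸ P)
    set x := Ideal.Quotient.mk P w
    have hx3 : x ^ 3 = 1 := by rw [← map_pow, S.w3, map_one]
    have hx1 : x ≠ 1 := by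
      intro h
      apply hwP
      rw [← Ideal.Quotient.eq_zero_iff_mem, map_sub, map_one]
      exact sub_eq_zero.mpr h.symm
    have hx0 : x ≠ 0 := by rintro h; rw [h] at hx3; simp at hx3
    have h4 := FiniteField.pow_card_sub_one_eq_one x hx0
    rw [← Nat.card_eq_fintype_card, hc] at h4
    have h5 := orderOf_dvd_of_pow_eq_one h4
    rw [orderOf_eq_prime hx3 hx1] at h5
    have := S.hl9
    omega
  · have : absNorm Q = 1 := by
      rw [hPi] at hn
      exact Nat.eq_of_mul_eq_mul_left (pow_pos hlpos 2) (by rw [hn, mul_one])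
    rw [absNorm_eq_one_iff.mp this, mul_top] at hQ
    rw [hQ]; exact hP.isPrime

theorem dvd_map_iff (S : CubicSetup s w θ t l p) (Q I : Ideal O) (hQ : Q.map s = Q) : Q ∣ I.map s ↔ Q ∣ I := by
  rw [dvd_iff_le, dvd_iff_le]
  constructor
  · intro h x hx
    have h1 : s x ∈ Q := h (mem_map_of_mem s hx)
    rw [← hQ, mem_map_of_equiv] at h1
    obtain ⟨y, hy, hyx⟩ := h1
    rwa [← s.injective hyx]
  · intro h
    rw [← hQ]
    exact map_mono h

theorem emul_map (S : CubicSetup s w θ t l p) (I : Ideal O) :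
    emultiplicity (span {θ, (l : O)}) (I.map s) = emultiplicity (span {θ, (l : O)}) I := by
  apply le_antisymm
  · rw [emultiplicity_le_emultiplicity_iff]
    intro n h
    exact (S.dvd_map_iff _ _ (by rw [Ideal.map_pow, S.mapL])).mp h
  · rw [emultiplicity_le_emultiplicity_iff]
    intro n h
    exact (S.dvd_map_iff _ _ (by rw [Ideal.map_pow, S.mapL])).mpr h

theorem L0 (S : CubicSetup s w θ t l p) : span {θ, (l : O)} ≠ ⊥ := by
  intro h
  have := S.normL
  rw [h, absNorm_bot] at this
  exact pow_ne_zero 2 S.hl.ne_zero this.symm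

theorem primeL' (S : CubicSetup s w θ t l p) : Prime (span {θ, (l : O)}) := Ideal.prime_of_isPrime S.L0 S.primeL

theorem emul_norm (S : CubicSetup s w θ t l p) (b : O) : emultiplicity (span {θ, (l : O)}) (span {b * s b * s (s b)}) =
    3 * emultiplicity (span {θ, (l : O)}) (span {b}) := by
  have e : ∀ x : O, span {s x} = (span {x}).map s := fun x => by
    rw [Ideal.map_span, Set.image_singleton]
  rw [← span_singleton_mul_span_singleton, ← span_singleton_mul_span_singleton,
    emultiplicity_mul S.primeL', emultiplicity_mul S.primeL', e (s b), S.emul_map, e b, S.emul_map]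
  ring

theorem nonnorm (S : CubicSetup s w θ t l p) (a b : O) (ha : a ≠ 0) : b * s b * s (s b) ≠ w * (a * s a * s (s a)) := by
  intro h
  set P := span {θ, (l : O)} with hPdef
  have hP := S.primeL'
  rw [← hPdef] at hP
  have sne : ∀ x : O, x ≠ 0 → s x ≠ 0 := fun x hx => by simpa using hx
  have hw0 : w ≠ 0 := by
    intro h0
    have := S.w3
    rw [h0] at this
    simp at this
  have hwu : IsUnit w := by
    refine IsUnit.of_mul_eq_one (w ^ 2) ?_
    rw [← S.w3]; ring
  have hb : b ≠ 0 := by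
    rintro rfl
    simp [hw0, ha] at h
  have hspan : span {b * s b * s (s b)} = span {a * s a * s (s a)} := by
    rw [h, span_singleton_mul_left_unit hwu]
  have he := congrArg (emultiplicity P) hspan
  rw [S.emul_norm, S.emul_norm, ← hPdef] at he
  have fa : FiniteMultiplicity P (span {a}) :=
    FiniteMultiplicity.of_prime_left hP (by simpa using ha)
  have fb : FiniteMultiplicity P (span {b}) :=
    FiniteMultiplicity.of_prime_left hP (by simpa using hb)
  obtain ⟨A, hA, hPA⟩ := fa.exists_eq_pow_mul_and_not_dvd
  obtain ⟨B, hB, hPB⟩ := fb.exists_eq_pow_mul_and_not_dvd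
  have hv : multiplicity P (span {b}) = multiplicity P (span {a}) := by
    rw [fa.emultiplicity_eq_multiplicity, fb.emultiplicity_eq_multiplicity] at he
    have : 3 * multiplicity P (span {b}) = 3 * multiplicity P (span {a}) := by exact_mod_cast he
    omega
  rw [hv] at hB
  set v := multiplicity P (span {a})
  have hlv : span {(l : O) ^ v} = P ^ (3 * v) := by
    rw [pow_mul, S.cube, span_singleton_pow]
  have hlv0 : span {(l : O) ^ v} ≠ 0 := by
    simpa using fun h => absurd h (S.cast_ne _ S.hl.ne_zero)
  have h1 : span {a ^ 3} = span {(l : O) ^ v} * A ^ 3 := by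
    rw [hlv, ← span_singleton_pow, hA]; ring
  have h2 : span {b * a ^ 2} = span {(l : O) ^ v} * (B * A ^ 2) := by
    rw [hlv, ← span_singleton_mul_span_singleton, ← span_singleton_pow, hA, hB]; ring
  obtain ⟨a', ha'⟩ : (l : O) ^ v ∣ a ^ 3 := by
    rw [← span_singleton_le_span_singleton, ← dvd_iff_le]
    exact ⟨_, h1⟩
  obtain ⟨b', hb'⟩ : (l : O) ^ v ∣ b * a ^ 2 := by
    rw [← span_singleton_le_span_singleton, ← dvd_iff_le]
    exact ⟨_, h2⟩
  rw [ha', ← span_singleton_mul_span_singleton] at h1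
  have h1 := mul_left_cancel₀ hlv0 h1
  have haP : a' ∉ P := by
    rw [← span_singleton_le_iff_mem, ← dvd_iff_le, h1]
    exact fun hd => hPA (hP.dvd_of_dvd_pow hd)
  have hmain : b' * s b' * s (s b') = w * (a' * s a' * s (s a')) := by
    have hl0 : (l : O) ^ v ≠ 0 := pow_ne_zero _ (S.cast_ne _ S.hl.ne_zero)
    apply mul_left_cancel₀ (pow_ne_zero 3 hl0)
    have q1 := congrArg s ha'
    have q2 := congrArg s q1
    have q3 := congrArg s hb'
    have q4 := congrArg s q3
    simp only [map_mul, map_pow, map_natCast] at q1 q2 q3 q4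
    have r1 : ((l : O) ^ v) ^ 3 * (b' * s b' * s (s b')) =
        (l ^ v * b') * (l ^ v * s b') * (l ^ v * s (s b')) := by ring
    have r2 : ((l : O) ^ v) ^ 3 * (w * (a' * s a' * s (s a'))) =
        w * ((l ^ v * a') * (l ^ v * s a') * (l ^ v * s (s a'))) := by ring
    rw [r1, r2, ← ha', ← hb', ← q1, ← q2, ← q3, ← q4]
    linear_combination (a * s a * s (s a)) ^ 2 * h
  have : P.IsPrime := S.primeL
  have hmax : P.IsMaximal := this.isMaximal S.L0
  let _ := Ideal.Quotient.field P
  have hle : P ≤ comap (s : O →+* O) P := by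
    intro x hx
    have := mem_map_of_mem s hx
    rw [hPdef, S.mapL] at this
    exact this
  let τ : O ⧸ P →+* O ⧸ P := Ideal.quotientMap P (s : O →+* O) hle
  have hτ : ∀ x, τ (Ideal.Quotient.mk P x) = Ideal.Quotient.mk P (s x) := fun x => by
    simp [τ]
  have hc : Nat.card (O ⧸ P) = l ^ 2 := by
    rw [← S.normL, absNorm_apply]; rfl
  have : Finite (O ⧸ P) := Nat.finite_of_card_ne_zero (by
    rw [hc]; exact pow_ne_zero 2 S.hl.ne_zero)
  have hm : ∃ m, m % 3 ≠ 0 ∧ l ^ 2 = 3 * m + 1 := by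
    rcases S.hl9 with h9 | h9
    · obtain ⟨c, hc⟩ : ∃ c, l = 9 * c + 2 := ⟨l / 9, by omega⟩
      exact ⟨27 * c ^ 2 + 12 * c + 1, by omega, by rw [hc]; ring⟩
    · obtain ⟨c, hc⟩ : ∃ c, l = 9 * c + 5 := ⟨l / 9, by omega⟩
      exact ⟨27 * c ^ 2 + 30 * c + 8, by omega, by rw [hc]; ring⟩
  obtain ⟨m, hm3, hm⟩ := hm
  have hwP := S.w_notin P hmax.ne_top (subset_span (by simp))
  set a₁ := Ideal.Quotient.mk P a'
  have ha₁ : a₁ ≠ 0 := by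
    intro h0
    exact haP (Ideal.Quotient.eq_zero_iff_mem.mp h0)
  refine finfield τ (Ideal.Quotient.mk P w) (Ideal.Quotient.mk P b' / a₁) m hm3 (hc.trans hm)
    (by rw [← map_pow, S.w3, map_one]) ?_ (by rw [hτ, S.sw]) ?_
  · intro h1
    apply hwP
    rw [← Ideal.Quotient.eq_zero_iff_mem, map_sub, map_one]
    exact sub_eq_zero.mpr h1.symm
  · have ha₂ : τ a₁ ≠ 0 := by simpa using ha₁
    have ha₃ : τ (τ a₁) ≠ 0 := by simpa using ha₁
    have hm' := congrArg (Ideal.Quotient.mk P) hmain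
    simp only [map_mul, ← hτ] at hm'
    rw [map_div₀, map_div₀]
    field_simp
    rw [hm']
    ring

theorem unitnorm (S : CubicSetup s w θ t l p) (a b u : O) (ha : a ≠ 0) (hu : IsUnit u)
    (h : b * s b * s (s b) = u * (a * s a * s (s a))) :
    b * s b * s (s b) = a * s a * s (s a) ∨ b * s b * s (s b) = - (a * s a * s (s a)) := by
  have ha0 : a * s a * s (s a) ≠ 0 := by simpa using ha
  have hsu : s u = u := by
    have h1 := congrArg s h
    simp only [map_mul, S.s3] at h1
    apply mul_right_cancel₀ ha0
    linear_combination h - h1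
  have key : ∀ x : O, ∀ i : ℕ, x * s x * s (s x) = w ^ i * (a * s a * s (s a)) →
      x * s x * s (s x) = a * s a * s (s a) := by
    intro x i hx
    have hi : w ^ i = w ^ (i % 3) := by
      conv_lhs => rw [← Nat.div_add_mod i 3, pow_add, pow_mul, S.w3, one_pow, one_mul]
    rw [hi] at hx
    have : i % 3 < 3 := Nat.mod_lt _ (by norm_num)
    interval_cases i % 3
    · simpa using hx
    · exact absurd (by simpa using hx) (S.nonnorm a x ha)
    · exfalso
      refine S.nonnorm (a ^ 2) (x ^ 2) (pow_ne_zero 2 ha) ?_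
      simp only [map_pow]
      calc _ = (x * s x * s (s x)) ^ 2 := by ring
        _ = _ := by rw [hx]; linear_combination w * (a * s a * s (s a)) ^ 2 * S.w3
  obtain ⟨i, rfl | rfl⟩ := S.units u hu hsu
  · exact Or.inl (key b i h)
  · right
    have := key (-b) i (by simp only [map_neg]; linear_combination -h)
    simp only [map_neg] at this
    linear_combination -this

/-- Hilbert 90. -/
theorem hilbert90 (S : CubicSetup s w θ t l p) (a b : O) (ha : a ≠ 0)
    (h : b * s b * s (s b) = a * s a * s (s a)) : ∃ y, y ≠ 0 ∧ b * s y = a * y := by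
  have key : ∀ x : O, b * s (x * (a * s a * s (s a)) + b * s a * s (s a) * s x +
      b * s b * s (s a) * s (s x)) = a * (x * (a * s a * s (s a)) + b * s a * s (s a) * s x +
      b * s b * s (s a) * s (s x)) := by
    intro x
    simp only [map_add, map_mul, S.s3]
    linear_combination a * x * h
  by_contra hcon
  push Not at hcon
  have z : ∀ x : O, x * (a * s a * s (s a)) + b * s a * s (s a) * s x +
      b * s b * s (s a) * s (s x) = 0 := by
    intro x
    by_contra hne
    exact hcon _ hne (key x)
  have z0 := z 1
  have z1 := z θ
  have z2 := z (θ ^ 2)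
  simp only [map_one, map_mul, map_pow, S.sθ, S.sw] at z0 z1 z2
  have ha0 : a * s a * s (s a) ≠ 0 := by simpa using ha
  have h3 := S.cast_ne 3 (by norm_num)
  apply mul_ne_zero (mul_ne_zero h3 ha0) (pow_ne_zero 2 S.θ0)
  push_cast
  have hw2 : w ^ 2 = - w - 1 := by linear_combination S.hw
  linear_combination θ ^ 2 * z0 + θ * z1 + z2 - (θ ^ 2 * (b * s a * s (s a)) + θ ^ 2 * b * s b * s (s a) * (w ^ 2 - w + 1)) * S.hw

theorem w1 (S : CubicSetup s w θ t l p) : 1 - w ≠ 0 := by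
  intro h
  have h3 := S.cast_ne 3 (by norm_num)
  apply h3
  push_cast
  linear_combination S.hw + (w + 2) * h

theorem st (S : CubicSetup s w θ t l p) : s t = t - θ := by
  have h := congrArg s S.ht
  simp only [map_mul, map_sub, map_one, S.sw, S.sθ] at h
  apply mul_left_cancel₀ S.w1
  linear_combination h - S.ht

theorem inv (S : CubicSetup s w θ t l p) (J : Ideal O) (hJ : J ≠ ⊥) (hs : J.map s = J) :
    ∃ g : O, ∃ i j : ℕ, g ≠ 0 ∧ s g = g ∧ i ≤ 2 ∧ j ≤ 2 ∧
      J * (span {θ, (l : O)} ^ i * span {θ, (p : O)} ^ j) = span {g} := by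
  obtain ⟨g, hg0, hsg, hgJ, hg⟩ := S.gen J hJ hs
  have hsJ : ∀ x ∈ J, s x ∈ J := fun x hx => by
    have := mem_map_of_mem s hx
    rwa [hs] at this
  have htr : ∀ x ∈ J, g ∣ x + s x + s (s x) := by
    intro x hx
    refine hg _ (J.add_mem (J.add_mem hx (hsJ _ hx)) (hsJ _ (hsJ _ hx))) ?_
    simp only [map_add, S.s3]
    ring
  have hdiv : ∀ x ∈ J, g ∣ x * θ ^ 2 := by
    intro x hx
    have d0 := htr x hx
    have d1 := htr (x * t) (J.mul_mem_right _ hx)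
    have d2 := htr (x * t ^ 2) (J.mul_mem_right _ hx)
    have hst : s (s t) = t - θ - w * θ := by rw [S.st, map_sub, S.st, S.sθ]
    have : x * θ ^ 2 = -w * ((x * t ^ 2 + s (x * t ^ 2) + s (s (x * t ^ 2)))
      - (s t + s (s t)) * (x * t + s (x * t) + s (s (x * t)))
      + s t * s (s t) * (x + s x + s (s x))) := by
      simp only [map_mul, map_pow]
      have e : -w * (x * (t - s t) * (t - s (s t))) = x * θ ^ 2 := by
        rw [hst, S.st]
        linear_combination (-x * θ ^ 2) * S.hw
      rw [← e]
      ring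
    rw [this]
    exact Dvd.dvd.mul_left (dvd_add (dvd_sub d2 (Dvd.dvd.mul_left d1 _)) (Dvd.dvd.mul_left d0 _)) _
  obtain ⟨M, hM⟩ : J ∣ span {g} := by rwa [dvd_iff_le, span_singleton_le_iff_mem]
  have hMd : M ∣ span {θ ^ 2} := by
    have : J * M ∣ J * span {θ ^ 2} := by
      rw [← hM, dvd_iff_le, mul_comm, span_singleton_mul_le_iff]
      intro z hz
      rw [mem_span_singleton, mul_comm]
      exact hdiv z hz
    exact (mul_dvd_mul_iff_left hJ).mp this
  rw [← span_singleton_pow, ← S.mulθ, mul_pow] at hMd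
  obtain ⟨A, B, hA, hB, rfl⟩ := exists_dvd_and_dvd_of_dvd_mul hMd
  obtain ⟨i, hi, hAi⟩ := (dvd_prime_pow S.primeL' 2).mp hA
  obtain ⟨j, hj, hBj⟩ := (dvd_prime_pow S.symm'.primeL' 2).mp hB
  rw [associated_iff_eq] at hAi hBj
  exact ⟨g, i, j, hg0, hsg, hi, hj, by rw [hM, hAi, hBj]⟩

/-- The ramified primes are principal. -/
theorem princ (S : CubicSetup s w θ t l p) : Pr (span {θ, (l : O)}) := by
  by_contra hcon
  set P := span {θ, (l : O)} with hP
  set Q := span {θ, (p : O)} with hQ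
  have hP0 : P ≠ ⊥ := S.L0
  have hQ0 : Q ≠ ⊥ := S.symm'.L0
  have hPQ : P * Q = span {θ} := S.mulθ
  have hP3 : Pr (P ^ 3) := ⟨_, S.cube⟩
  have hPQp : Pr (P * Q) := ⟨_, hPQ⟩
  have hPpow : ∀ i, Pr (P ^ i) → i % 3 = 0 := by
    intro i hi
    by_contra h3
    apply hcon
    obtain ⟨c, hc⟩ : ∃ c, i = 3 * c + 1 ∨ i = 3 * c + 2 := ⟨i / 3, by omega⟩
    rcases hc with rfl | rfl
    · rw [pow_succ, pow_mul] at hi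
      exact (hP3.pow c).cancel hi (pow_ne_zero _ (pow_ne_zero _ hP0))
    · have := hi.pow 2
      rw [← pow_mul, show (3 * c + 2) * 2 = 3 * (2 * c + 1) + 1 by ring, pow_succ, pow_mul] at this
      exact (hP3.pow _).cancel this (pow_ne_zero _ (pow_ne_zero _ hP0))
  have step : ∀ u : O, IsUnit u → ∃ v : O, IsUnit v ∧ ∃ i : ℕ,
      u * s v = w ^ i * v ∨ u * s v = - (w ^ i * v) := by
    have step1 : ∀ u : O, IsUnit u → u * s u * s (s u) = 1 → ∃ v : O, IsUnit v ∧ ∃ i : ℕ,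
      u * s v = w ^ i * v := by
      intro u hu hN
      obtain ⟨y, hy0, hy⟩ := S.hilbert90 1 u one_ne_zero (by simpa using hN)
      rw [one_mul] at hy
      have hsy : (span {y}).map s = span {y} := by
        rw [Ideal.map_span, Set.image_singleton]
        nth_rewrite 2 [← hy]
        rw [span_singleton_mul_left_unit hu]
      obtain ⟨g, i, j, hg0, hsg, hi, hj, hg⟩ := S.inv (span {y}) (by simpa using hy0) hsy
      rw [← hP, ← hQ] at hg
      have hM : Pr (P ^ i * Q ^ j) :=
        Pr.cancel ⟨y, rfl⟩ ⟨g, hg⟩ (by simpa using hy0)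
      have hij : i = j := by
        rcases le_total i j with hle | hle
        · obtain ⟨c, rfl⟩ := Nat.exists_eq_add_of_le hle
          have h2 : Pr (P ^ c * (P ^ i * Q ^ (i + c))) := by
            have := hPQp.pow (i + c)
            rw [mul_pow] at this
            convert this using 1
            ring
          rw [mul_comm] at h2
          have := hPpow c (hM.cancel h2 (mul_ne_zero (pow_ne_zero _ hP0) (pow_ne_zero _ hQ0)))
          omega
        · obtain ⟨c, rfl⟩ := Nat.exists_eq_add_of_le hle
          have h2 : Pr ((P * Q) ^ j * P ^ c) := by
            convert hM using 1
            ring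
          have := hPpow c ((hPQp.pow j).cancel h2 (pow_ne_zero _ (mul_ne_zero hP0 hQ0)))
          omega
      subst hij
      rw [← mul_pow, hPQ, span_singleton_pow, span_singleton_mul_span_singleton,
        span_singleton_eq_span_singleton] at hg
      obtain ⟨v, hv⟩ := hg.symm
      refine ⟨v, v.isUnit, i, ?_⟩
      have h1 := congrArg s hv
      simp only [map_mul, map_pow, S.sθ, hsg] at h1
      apply mul_left_cancel₀ hg0
      linear_combination u * h1 + (w * θ) ^ i * hy - w ^ i * hv + y * mul_pow w θ i
    intro u hu
    have hN : IsUnit (u * s u * s (s u)) := (hu.mul (hu.map s)).mul ((hu.map s).map s)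
    rcases S.unitnorm 1 u _ one_ne_zero hN (by simp) with h | h
    · obtain ⟨v, hv, i, h'⟩ := step1 u hu (by simpa using h)
      exact ⟨v, hv, i, Or.inl h'⟩
    · obtain ⟨v, hv, i, h'⟩ := step1 (-u) hu.neg (by
        simp only [map_neg, map_one] at h ⊢; linear_combination -h)
      exact ⟨v, hv, i, Or.inr (by linear_combination -h')⟩
  obtain ⟨η, hη, hbig⟩ := S.bigunit
  obtain ⟨v, hv, i, h1⟩ := step η hη
  obtain ⟨x, hx, j, h2⟩ := step v hv
  have hN : IsUnit (x * s x * s (s x)) := (hx.mul (hx.map s)).mul ((hx.map s).map s)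
  -- η = ± w^i * (s x)^(-3)
  have hN1 := S.unitnorm 1 x _ one_ne_zero hN (by simp)
  simp only [map_one, one_mul] at hN1
  obtain ⟨y, hy⟩ := (hx.map s).exists_right_inv
  have hyu : IsUnit y := IsUnit.of_mul_eq_one (s x) (by rw [mul_comm]; exact hy)
  have hwu : IsUnit w := by
    refine IsUnit.of_mul_eq_one (w ^ 2) ?_
    rw [← S.w3]; ring
  obtain ⟨b1, b2⟩ := hbig y hyu i
  have h3 : s v * s (s x) = w ^ j * s x ∨ s v * s (s x) = -(w ^ j * s x) := by
    rcases h2 with h2 | h2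
    · left
      have := congrArg s h2
      simpa only [map_mul, map_pow, S.sw] using this
    · right
      have := congrArg s h2
      simpa only [map_mul, map_pow, S.sw, map_neg] using this
  -- multiply
  have h4 : η * (s x) ^ 3 = w ^ i ∨ η * (s x) ^ 3 = - w ^ i := by
    have e1 : (η * s x ^ 3) * w ^ j = w ^ i * w ^ j ∨ (η * s x ^ 3) * w ^ j = -w ^ i * w ^ j := by
      have f1 : η * s v * (s x * s (s x) * s x) = w ^ i * (v * s x) * (s (s x) * s x) ∨
         η * s v * (s x * s (s x) * s x) = - (w ^ i * (v * s x) * (s (s x) * s x)) := by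
        rcases h1 with h1 | h1
        · left; rw [h1]; ring
        · right; rw [h1]; ring
      have f2 : v * s x * (s (s x) * s x) = w ^ j * (x * s x * s (s x)) ∨
          v * s x * (s (s x) * s x) = -(w ^ j * (x * s x * s (s x))) := by
        rcases h2 with h2 | h2
        · left; rw [h2]; ring
        · right; rw [h2]; ring
      have f3 : η * s v * (s x * s (s x) * s x) = η * s x ^ 2 * (w ^ j * s x) ∨
          η * s v * (s x * s (s x) * s x) = -(η * s x ^ 2 * (w ^ j * s x)) := by
        rcases h3 with h3 | h3
        · left; rw [← h3]; ring
        · right; linear_combination η * s x ^ 2 * h3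
      rcases f1 with f1 | f1 <;> rcases f2 with f2 | f2 <;> rcases f3 with f3 | f3 <;>
        rcases hN1 with n | n <;> rw [n] at f2 <;>
        first
        | (left; linear_combination f3 - f1 - w ^ i * f2)
        | (left; linear_combination f1 - f3 - w ^ i * f2)
        | (left; linear_combination f1 - f3 + w ^ i * f2)
        | (left; linear_combination f3 - f1 + w ^ i * f2)
        | (left; linear_combination -f3 + f1 + w ^ i * f2)
        | (right; linear_combination f3 - f1 - w ^ i * f2)
        | (right; linear_combination f1 - f3 - w ^ i * f2)
        | (right; linear_combination f1 - f3 + w ^ i * f2)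
        | (right; linear_combination f3 - f1 + w ^ i * f2)
    have hwj : w ^ j ≠ 0 := (hwu.pow j).ne_zero
    rcases e1 with e | e
    · left; exact mul_right_cancel₀ hwj e
    · right; exact mul_right_cancel₀ hwj e
  have hy3 : (s x) ^ 3 * y ^ 3 = 1 := by rw [← mul_pow, hy, one_pow]
  rcases h4 with h4 | h4
  · apply b1; linear_combination y ^ 3 * h4 - η * hy3
  · apply b2; linear_combination y ^ 3 * h4 - η * hy3

theorem claimA (S : CubicSetup s w θ t l p) (I : Ideal O) (hI : I ≠ ⊥) (a b : O) (ha : a ≠ 0)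
    (h : span {a} * I.map s = span {b} * I) : Pr I := by
  have e : ∀ x : O, span {s x} = (span {x}).map s := fun x => by
    rw [Ideal.map_span, Set.image_singleton]
  have hsI : I.map s ≠ ⊥ := by
    rwa [Ne, Ideal.map_eq_bot_iff_of_injective s.injective]
  have h1 := congrArg (Ideal.map s) h
  have h2 := congrArg (Ideal.map s) h1
  simp only [Ideal.map_mul, S.sl, ← e] at h1 h2
  have h3 : span {b * s b * s (s b)} = span {a * s a * s (s a)} := by
    simp only [← span_singleton_mul_span_singleton]
    have : (span {b} * span {s b} * span {s (s b)}) * I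
        = span {a} * span {s a} * span {s (s a)} * I := by
      calc _ = span {s b} * span {s (s b)} * (span {b} * I) := by ring
        _ = span {a} * span {s (s b)} * (span {s b} * I.map s) := by rw [← h]; ring
        _ = span {a} * span {s a} * (span {s (s b)} * (I.map s).map s) := by rw [← h1]; ring
        _ = _ := by rw [← h2]; ring
    exact mul_right_cancel₀ hI this
  rw [span_singleton_eq_span_singleton] at h3
  obtain ⟨u, hu⟩ := h3.symm
  have hb : ∃ b', span {b'} = span {b} ∧ b' * s b' * s (s b') = a * s a * s (s a) := by
    rcases S.unitnorm a b u ha u.isUnit (by rw [← hu]; ring) with h | h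
    · exact ⟨b, rfl, h⟩
    · exact ⟨-b, by rw [span_singleton_neg], by simp only [map_neg]; linear_combination -h⟩
  obtain ⟨b', hb', hN⟩ := hb
  obtain ⟨y, hy0, hy⟩ := S.hilbert90 a b' ha hN
  have hinv : (span {y} * I).map s = span {y} * I := by
    rw [Ideal.map_mul, ← e]
    have ha' : span {a} ≠ ⊥ := by simpa using ha
    apply mul_left_cancel₀ ha'
    calc _ = span {s y} * (span {a} * I.map s) := by ring
      _ = (span {b'} * span {s y}) * I := by rw [h, hb']; ring
      _ = _ := by rw [span_singleton_mul_span_singleton, hy,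
                    ← span_singleton_mul_span_singleton, mul_assoc]
  have hy' : span {y} ≠ ⊥ := by simpa using hy0
  obtain ⟨g, i, j, hg0, hsg, hi, hj, hg⟩ := S.inv _ (mul_ne_zero hy' hI) hinv
  have hM := (S.princ.pow i).mul (S.symm'.princ.pow j)
  have hJ : Pr (span {y} * I) := by
    refine Pr.cancel hM ⟨g, by rw [← hg, mul_comm]⟩ ?_
    exact mul_ne_zero (pow_ne_zero _ S.L0) (pow_ne_zero _ S.symm'.L0)
  exact Pr.cancel ⟨y, rfl⟩ hJ hy'

theorem claimA' (S : CubicSetup s w θ t l p) (I : Ideal O) (hI : I ≠ ⊥) (h3 : Pr (I ^ 3)) (h : Pr (I.map s * I ^ 2)) :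
    Pr I := by
  obtain ⟨a, ha⟩ := h3
  obtain ⟨b, hb⟩ := h
  have ha0 : a ≠ 0 := by
    rintro rfl
    have := pow_ne_zero 3 hI
    rw [ha] at this
    simp at this
  refine S.claimA I hI a b ha0 ?_
  rw [← ha, ← hb]
  ring

theorem no3 (S : CubicSetup s w θ t l p) (I : Ideal O) (hI : I ≠ ⊥) (h3 : Pr (I ^ 3)) : Pr I := by
  have hmap : ∀ I : Ideal O, I ≠ ⊥ → I.map s ≠ ⊥ := fun I hI => by
    rwa [Ne, Ideal.map_eq_bot_iff_of_injective s.injective]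
  have D0 : ∀ I : Ideal O, I ≠ ⊥ → I.map s * I ^ 2 ≠ ⊥ := fun I hI =>
    mul_ne_zero (hmap I hI) (pow_ne_zero 2 hI)
  have D3 : ∀ I : Ideal O, Pr (I ^ 3) → Pr ((I.map s * I ^ 2) ^ 3) := by
    intro I h
    rw [mul_pow, ← Ideal.map_pow, ← pow_mul, mul_comm 2 3, pow_mul]
    exact h.map.mul (h.pow 2)
  apply S.claimA' I hI h3
  apply S.claimA' _ (D0 _ hI) (D3 _ h3)
  apply S.claimA' _ (D0 _ (D0 _ hI)) (D3 _ (D3 _ h3))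
  simp only [Ideal.map_mul, Ideal.map_pow, S.sl]
  have h3' : Pr ((I.map s) ^ 3) := by rw [← Ideal.map_pow]; exact h3.map
  have h3c : Pr (((I.map s).map s) ^ 3) := by rw [← Ideal.map_pow]; exact h3'.map
  convert ((h3.pow 3).mul (h3'.pow 4)).mul (h3c.pow 2) using 1
  ring

theorem exists_pow (S : CubicSetup s w θ t l p) [Finite (ClassGroup O)] (I : Ideal O) (hI : I ≠ ⊥) :
    ∃ h : ℕ, h % 3 ≠ 0 ∧ Pr (I ^ h) := by
  have pr_iff : ∀ (J : nonZeroDivisors (Ideal O)), ClassGroup.mk0 J = 1 ↔ Pr (J : Ideal O) := by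
    rintro ⟨J, hJ⟩
    rw [ClassGroup.mk0_eq_one_iff]
    constructor
    · rintro ⟨a, ha⟩; exact ⟨a, ha⟩
    · rintro ⟨a, ha⟩; exact ⟨a, ha⟩
  have := Fintype.ofFinite (ClassGroup O)
  refine ⟨Nat.card (ClassGroup O), ?_, ?_⟩
  · intro h
    have : Fact (Nat.Prime 3) := ⟨Nat.prime_three⟩
    obtain ⟨x, hx⟩ := exists_prime_orderOf_dvd_card' (G := ClassGroup O) 3 (Nat.dvd_of_mod_eq_zero h)
    obtain ⟨J, rfl⟩ := ClassGroup.mk0_surjective x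
    have h1 : ClassGroup.mk0 J ^ 3 = 1 := by rw [← hx]; exact pow_orderOf_eq_one _
    rw [← map_pow, pr_iff] at h1
    have h2 := S.no3 J (nonZeroDivisors.coe_ne_zero J) (by simpa using h1)
    rw [← pr_iff] at h2
    rw [h2, orderOf_one] at hx
    norm_num at hx
  · have := pr_iff (⟨I, mem_nonZeroDivisors_of_ne_zero hI⟩ ^ Nat.card (ClassGroup O))
    rw [map_pow, pow_card_eq_one'] at this
    simpa using this.mp rfl

theorem exists_p (S : CubicSetup s w θ t l p) : ∃ a : O, absNorm (span {a}) = p ^ 2 := by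
  obtain ⟨a, ha⟩ := S.symm'.princ
  exact ⟨a, by rw [← ha, S.symm'.normL]⟩

theorem exists_q (S : CubicSetup s w θ t l p) [Finite (ClassGroup O)] (q : ℕ) (hq : q.Prime) (hq3 : q % 3 = 2)
    (hlq : l ≠ q) (hpq : p ≠ q) :
    ∃ a : O, ∃ h : ℕ, h % 3 ≠ 0 ∧ absNorm (span {a}) = q ^ (2 * h) := by
  -- cube root of l p mod q
  obtain ⟨m, hm⟩ : ∃ m : ℕ, (q : ℤ) ∣ (l * p : ℤ) - m ^ 3 := by
    have : Fact q.Prime := ⟨hq⟩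
    obtain ⟨c, hc⟩ : ∃ c, q = 3 * c + 2 := ⟨q / 3, by omega⟩
    refine ⟨(l * p) ^ (2 * c + 1), ?_⟩
    rw [← ZMod.intCast_zmod_eq_zero_iff_dvd]
    push_cast
    have hx : ((l : ZMod q) * p) ^ q = (l : ZMod q) * p := ZMod.pow_card _
    set x := (l : ZMod q) * p
    have : (x ^ (2 * c + 1)) ^ 3 = x := by
      calc _ = x ^ (3 * c + 2) * x ^ (3 * c + 2) * x⁻¹ * (if x = 0 then 0 else 1) := by
            split_ifs with h0
            · rw [h0]; simp
            · field_simp; ring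
        _ = x := by
            rw [← hc, hx]
            split_ifs with h0
            · rw [h0]; simp
            · field_simp
    rw [this, sub_self]
  have hm' : (q : O) ∣ (l : O) * p - m ^ 3 := by
    have := map_dvd (Int.castRingHom O) hm
    simpa using this
  have hqm : Nat.Coprime q m := by
    rw [hq.coprime_iff_not_dvd]
    intro hd
    have h1 : (q : ℤ) ∣ (l * p : ℤ) := by
      have h2 : (q : ℤ) ∣ (m : ℤ) ^ 3 := dvd_pow (by exact_mod_cast hd) (by norm_num)
      have := dvd_add hm h2
      simpa using this
    have h2 : q ∣ l * p := by exact_mod_cast h1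
    rcases hq.dvd_mul.mp h2 with h | h
    · exact hlq ((Nat.prime_dvd_prime_iff_eq hq S.hl).mp h).symm
    · exact hpq ((Nat.prime_dvd_prime_iff_eq hq S.hp).mp h).symm
  have hq3m : Nat.Coprime q (3 * m) := by
    refine Nat.Coprime.mul_right ?_ hqm
    rw [Nat.coprime_primes hq Nat.prime_three]
    omega
  let J : O → Ideal O := fun z => span {(q : O), θ - z * m}
  have cop : ∀ z z' c : O, c * (z' - z) = 3 → J z ⊔ J z' = ⊤ := by
    intro z z' c hc
    rw [eq_top_iff_one]
    have m1 : (q : O) ∈ J z ⊔ J z' := mem_sup_left (subset_span (by simp))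
    have m2 : θ - z * m ∈ J z ⊔ J z' := mem_sup_left (subset_span (by simp))
    have m3 : θ - z' * m ∈ J z ⊔ J z' := mem_sup_right (subset_span (by simp))
    apply S.span_coprime q (3 * m) hq3m
    · simpa using m1
    · have := mul_mem_left _ c (Ideal.sub_mem _ m2 m3)
      convert this using 1
      push_cast
      linear_combination (-m : O) * hc
  have c01 : J 1 ⊔ J w = ⊤ := cop 1 w (-(2 + w)) (by linear_combination -S.hw)
  have c02 : J 1 ⊔ J (w ^ 2) = ⊤ := cop 1 (w ^ 2) (-(1-w)) (by
    linear_combination (w - 2) * S.hw)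
  have c12 : J w ⊔ J (w ^ 2) = ⊤ := cop w (w ^ 2) (-(2 * w ^ 2 + 1)) (by
    linear_combination (-2 * w + 2) * S.w3 - S.hw)
  have hprod : J 1 * J w * J (w ^ 2) = span {(q : O)} := by
    apply le_antisymm
    · simp only [J]
      rw [span_pair_mul_span_pair, span_mul_span', span_le]
      intro x hx
      simp only [Set.mem_mul, Set.mem_insert_iff, Set.mem_singleton_iff] at hx
      rw [SetLike.mem_coe, mem_span_singleton]
      rcases hx with ⟨a, ha, b, hb, rfl⟩
      rcases hb with rfl | rfl
      · exact dvd_mul_left _ _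
      · rcases ha with rfl | rfl | rfl | rfl
        · exact Dvd.dvd.mul_right (dvd_mul_right _ _) _
        · exact Dvd.dvd.mul_right (dvd_mul_right _ _) _
        · exact Dvd.dvd.mul_right (dvd_mul_left _ _) _
        · convert hm' using 1
          rw [← S.hθ]
          have hw2 : w ^ 2 = -w - 1 := by linear_combination S.hw
          linear_combination (-(θ ^ 2 * m) + w * θ * m ^ 2) * S.hw - m ^ 3 * S.w3
    · have i1 : J 1 * J w = J 1 ⊓ J w := mul_eq_inf_of_coprime c01
      have i2 : J 1 * J w * J (w ^ 2) = J 1 * J w ⊓ J (w ^ 2) := by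
        apply mul_eq_inf_of_coprime
        rw [mul_sup_eq_of_coprime_left c02, c12]
      rw [i2, i1, span_singleton_le_iff_mem]
      exact ⟨⟨subset_span (by simp), subset_span (by simp)⟩, subset_span (by simp)⟩
  have hsJ : ∀ z, s z = z → (J (w * z)).map s = J z := by
    intro z hz
    simp only [J]
    rw [Ideal.map_span, Set.image_pair, map_natCast, map_sub, S.sθ, map_mul, map_mul, hz, S.sw,
      map_natCast]
    have hwu : IsUnit w := by
      refine IsUnit.of_mul_eq_one (w ^ 2) ?_
      rw [← S.w3]; ring
    rw [show w * θ - w * z * m = w * (θ - z * m) by ring, span_insert, span_insert,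
      span_singleton_mul_left_unit hwu]
  have hnorm : ∀ I : Ideal O, absNorm (I.map s) = absNorm I := by
    intro I
    rw [absNorm_apply, absNorm_apply]
    exact (Nat.card_congr (Ideal.quotientEquiv I (I.map s) s rfl).toEquiv).symm
  have n1 : absNorm (J w) = absNorm (J 1) := by
    rw [← hsJ 1 (map_one s), hnorm, mul_one]
  have n2 : absNorm (J (w ^ 2)) = absNorm (J 1) := by
    rw [← n1, ← hsJ w S.sw, hnorm, pow_two]
  have hn : absNorm (J 1) = q ^ 2 := by
    have := congrArg absNorm hprod
    rw [map_mul, map_mul, n1, n2, S.card] at this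
    exact Nat.pow_left_injective (n := 3) (by norm_num)
      (show absNorm (J 1) ^ 3 = (q ^ 2) ^ 3 by rw [← pow_mul, ← this]; ring)
  have hJ0 : J 1 ≠ ⊥ := by
    intro h
    rw [h, absNorm_bot] at hn
    exact pow_ne_zero 2 hq.ne_zero hn.symm
  obtain ⟨h, hh, a, ha⟩ := S.exists_pow (J 1) hJ0
  exact ⟨a, h, hh, by rw [← ha, map_pow, hn, pow_mul]⟩

end CubicSetup

open NumberField IntermediateField Polynomial in
theorem exists_bigunit (L : Type*) [Field L] [NumberField L] (h6 : Module.finrank ℚ L = 6)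
    (w : 𝓞 L) (hw : w ^ 3 = 1) :
    ∃ η : 𝓞 L, IsUnit η ∧ ∀ v : 𝓞 L, IsUnit v → ∀ i : ℕ,
      η ≠ w ^ i * v ^ 3 ∧ η ≠ - (w ^ i * v ^ 3) := by
  have hr : 0 < Units.rank L := by
    have h1 := InfinitePlace.card_add_two_mul_card_eq_rank L
    have h2 := InfinitePlace.card_eq_nrRealPlaces_add_nrComplexPlaces L
    unfold Units.rank
    omega
  let i0 : Fin (Units.rank L) := ⟨0, hr⟩
  have hwu : IsUnit w := IsUnit.of_pow_eq_one hw (by norm_num)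
  obtain ⟨w', rfl⟩ := hwu
  have hw' : w' ^ 3 = 1 := by ext; simpa using congrArg (algebraMap (𝓞 L) L) hw
  have key : ∀ (z v : (𝓞 L)ˣ), z ^ 6 = 1 → Units.fundSystem L i0 ≠ z * v ^ 3 := by
    intro z v hz h
    obtain ⟨⟨ζ, e⟩, hv, -⟩ := Units.exist_unique_eq_mul_prod L v
    have hzt : z ∈ Units.torsion L := by
      rw [Units.torsion, CommGroup.mem_torsion, isOfFinOrder_iff_pow_eq_one]
      exact ⟨6, by norm_num, hz⟩
    have hu := (Units.exist_unique_eq_mul_prod L (Units.fundSystem L i0)).unique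
      (y₁ := (1, Pi.single i0 1)) (y₂ := (⟨z, hzt⟩ * ζ ^ 3, fun i => e i * 3)) (by
        simp only [OneMemClass.coe_one, one_mul]
        rw [Finset.prod_eq_single i0]
        · simp
        · intro b _ hb
          simp [hb]
        · simp) (by
        rw [h, hv]
        simp only [Subgroup.coe_mul, Subgroup.coe_pow, mul_pow, zpow_mul, zpow_ofNat,
          Finset.prod_pow]
        rw [mul_assoc])
    have := congrFun (congrArg Prod.snd hu) i0
    simp at this
    omega
  refine ⟨Units.fundSystem L i0, Units.isUnit _, ?_⟩
  rintro _ ⟨v, rfl⟩ i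
  constructor
  · intro h
    refine key (w' ^ i) v ?_ (by ext; simpa using congrArg (algebraMap (𝓞 L) L) h)
    rw [← pow_mul, mul_comm, pow_mul, show 6 = 3 * 2 from rfl, pow_mul, hw']; simp
  · intro h
    refine key (-w' ^ i) v ?_ (by ext; simpa using congrArg (algebraMap (𝓞 L) L) h)
    rw [Even.neg_pow (by decide), ← pow_mul, mul_comm, pow_mul, show 6 = 3 * 2 from rfl, pow_mul,
      hw']; simp

theorem not_rat_cube (l p : ℕ) (hl : l.Prime) (hp : p.Prime) (hlp : l ≠ p) (x : ℚ)
    (hx : x ^ 3 = ((l : ℚ) * p) ^ 2) : False := by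
  have : Fact l.Prime := ⟨hl⟩
  have : Fact p.Prime := ⟨hp⟩
  have hl0 : (l : ℚ) ≠ 0 := by exact_mod_cast hl.ne_zero
  have hp0 : (p : ℚ) ≠ 0 := by exact_mod_cast hp.ne_zero
  have hx0 : x ≠ 0 := by
    rintro rfl
    have : ((l : ℚ) * p) ^ 2 ≠ 0 := pow_ne_zero 2 (mul_ne_zero hl0 hp0)
    exact this (by rw [← hx]; ring)
  have h := congrArg (padicValRat l) hx
  rw [padicValRat.pow, padicValRat.pow, padicValRat.mul hl0 hp0,
    padicValRat.self hl.one_lt, padicValRat.of_nat, padicValNat_primes hlp] at h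
  push_cast at h
  omega

open NumberField IntermediateField Polynomial in
theorem build (k L : Type*) [Field k] [NumberField k] [Field L] [NumberField L] [Algebra k L]
    [IsCyclotomicExtension {3} ℚ k] (hk : Module.finrank ℚ k = 2) (hkL : Module.finrank k L = 3)
    (ζ : k) (hζ : IsPrimitiveRoot ζ 3) (l p : ℕ) (θ : L) (hθ : θ ^ 3 = (l : L) * p)
    (hl : l.Prime) (hp : p.Prime) (hl9 : l % 9 = 2 ∨ l % 9 = 5) (hp9 : p % 9 = 2 ∨ p % 9 = 5)
    (hlp : l ≠ p) (hlp9 : (l * p) % 9 = 1) :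
    ∃ (s : 𝓞 L ≃+* 𝓞 L) (w θ' t : 𝓞 L), CubicSetup s w θ' t l p := by
  have h6 : Module.finrank ℚ L = 6 := by
    rw [← Module.finrank_mul_finrank ℚ k L, hk, hkL]
  have hfd : FiniteDimensional k L := FiniteDimensional.of_finrank_pos (by omega)
  have hnotcube : ∀ b : k, b ^ 3 ≠ (l : k) * p := by
    intro b hb
    have h := congrArg (Algebra.norm ℚ) hb
    rw [map_pow, show (l : k) * p = algebraMap ℚ k (l * p) by simp, Algebra.norm_algebraMap, hk] at h
    exact not_rat_cube l p hl hp hlp _ h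
  have hsimple := IntermediateField.isSimpleOrder_of_finrank_prime k L
    (by rw [hkL]; exact Nat.prime_three)
  have hθtop : k⟮θ⟯ = ⊤ := by
    rcases hsimple.eq_bot_or_eq_top k⟮θ⟯ with h | h
    · rw [adjoin_simple_eq_bot_iff, mem_bot] at h
      obtain ⟨b, hb⟩ := h
      exfalso
      apply hnotcube b
      apply (algebraMap k L).injective
      rw [map_pow, hb, hθ]; simp
    · exact h
  have hinteg : IsIntegral k θ := Algebra.IsIntegral.isIntegral θ
  have hadj : Algebra.adjoin k {θ} = ⊤ := by
    rw [← adjoin_simple_toSubalgebra_of_isAlgebraic hinteg.isAlgebraic, hθtop]; rfl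
  have hmin : X ^ 3 - C ((l : k) * p) = minpoly k θ := by
    refine minpoly.eq_of_irreducible_of_monic
      (X_pow_sub_C_irreducible_of_prime Nat.prime_three hnotcube) ?_
      (monic_X_pow_sub_C _ (by norm_num))
    simp [hθ]
  let pb := PowerBasis.ofAdjoinEqTop hinteg hadj
  have hgen : pb.gen = θ := PowerBasis.ofAdjoinEqTop_gen hinteg hadj
  have hζ3 : ζ ^ 3 = 1 := hζ.pow_eq_one
  have hζ1 : ζ ≠ 1 := hζ.ne_one (by norm_num)
  have hζ2 : ζ ^ 2 + ζ + 1 = 0 := by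
    apply mul_left_cancel₀ (sub_ne_zero.mpr hζ1)
    linear_combination hζ3
  let f : L →ₐ[k] L := pb.lift (algebraMap k L ζ * θ) (by
    rw [hgen, ← hmin]
    simp only [map_sub, map_pow, aeval_X, aeval_C, map_mul, map_natCast, mul_pow, hθ]
    rw [← map_pow, hζ3]; simp)
  have hf : f θ = algebraMap k L ζ * θ := by
    conv_lhs => rw [← hgen]
    exact PowerBasis.lift_gen _ _ _
  let σ : L ≃ₐ[k] L := AlgEquiv.ofBijective f (AlgHom.bijective f)
  have hσθ : σ θ = algebraMap k L ζ * θ := hf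
  have hθ0 : θ ≠ 0 := by
    rintro rfl
    have h1 : (l : L) ≠ 0 := by exact_mod_cast hl.ne_zero
    have h2 : (p : L) ≠ 0 := by exact_mod_cast hp.ne_zero
    exact mul_ne_zero h1 h2 (by rw [← hθ]; ring)
  have ext_of : ∀ (x : L) (g : L →ₐ[k] L), k⟮x⟯ = ⊤ → g x = x → ∀ y, g y = y := by
    intro x g hx hg y
    have hx' : Algebra.adjoin k {x} = ⊤ := by
      rw [← adjoin_simple_toSubalgebra_of_isAlgebraic (Algebra.IsAlgebraic.isAlgebraic x), hx]; rfl
    have : g = AlgHom.id k L := by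
      apply AlgHom.ext_of_adjoin_eq_top hx'
      intro z hz
      rw [Set.mem_singleton_iff] at hz
      rw [hz, hg]; rfl
    rw [this]; rfl
  have hσ3 : ∀ x, σ (σ (σ x)) = x := by
    intro x
    refine ext_of θ ((σ : L →ₐ[k] L).comp ((σ : L →ₐ[k] L).comp (σ : L →ₐ[k] L))) hθtop ?_ x
    change σ (σ (σ θ)) = θ
    simp only [hσθ, map_mul, AlgEquiv.commutes]
    have : algebraMap k L ζ ^ 3 = 1 := by rw [← map_pow, hζ3, map_one]
    linear_combination θ * this
  have hfix : ∀ x, σ x = x → ∃ a : k, algebraMap k L a = x := by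
    intro x hx
    rcases hsimple.eq_bot_or_eq_top k⟮x⟯ with h | h
    · rw [adjoin_simple_eq_bot_iff, mem_bot] at h
      exact h
    · exfalso
      have : σ θ = θ := ext_of x (σ : L →ₐ[k] L) h hx θ
      rw [hσθ] at this
      have h1 : algebraMap k L ζ = 1 := mul_right_cancel₀ hθ0 (by rw [this, one_mul])
      exact hζ1 ((algebraMap k L).injective (by rw [h1, map_one]))
  let s : 𝓞 L ≃+* 𝓞 L := RingOfIntegers.mapRingEquiv (σ : L ≃+* L)
  have hs : ∀ x : 𝓞 L, ((s x : 𝓞 L) : L) = σ x := fun x => rfl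
  have hfixO : ∀ x : 𝓞 L, s x = x → ∃ a : 𝓞 k, algebraMap (𝓞 k) (𝓞 L) a = x := by
    intro x hx
    obtain ⟨a, ha⟩ := hfix x (by rw [← hs, hx])
    have hai : IsIntegral ℤ a := by
      rw [← isIntegral_algebraMap_iff (algebraMap k L).injective, ha]
      exact RingOfIntegers.isIntegral_coe x
    refine ⟨⟨a, hai⟩, ?_⟩
    ext
    exact ha
  let w0 : 𝓞 k := hζ.toInteger
  have hw0 : (w0 : k) = ζ := rfl
  let w : 𝓞 L := algebraMap (𝓞 k) (𝓞 L) w0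
  have hwc : (w : L) = algebraMap k L ζ := rfl
  have hwL : (algebraMap k L ζ) ^ 2 + algebraMap k L ζ + 1 = 0 := by
    rw [← map_pow, ← map_add, ← map_one (algebraMap k L), ← map_add, hζ2, map_zero]
  have hwO : w ^ 2 + w + 1 = 0 := by
    ext
    simpa [hwc] using hwL
  have hθi : IsIntegral ℤ θ := by
    apply IsIntegral.of_pow (n := 3) (by norm_num)
    rw [hθ, show (l : L) * p = algebraMap ℤ L (l * p) by simp]
    exact isIntegral_algebraMap
  obtain ⟨m, hm⟩ : ∃ m, l * p = 1 + 9 * m := ⟨l * p / 9, by omega⟩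
  have h1ζ : 1 - algebraMap k L ζ ≠ 0 := by
    intro h
    apply hζ1
    apply (algebraMap k L).injective
    rw [map_one]; linear_combination -h
  have hti : IsIntegral ℤ ((θ - 1) / (1 - algebraMap k L ζ)) := by
    apply isIntegral_trans (A := 𝓞 L)
    refine ⟨X ^ 3 + (C (2 + w) * X ^ 2 + C (1 + w) * X + C (- (m : 𝓞 L) * (w - w ^ 2))), ?_, ?_⟩
    · apply monic_X_pow_add
      compute_degree!
    · simp only [eval₂_add, eval₂_mul, eval₂_pow, eval₂_X, eval₂_C]
      simp only [map_add, map_mul, map_sub, map_neg, map_pow, map_one, map_natCast, map_ofNat]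
      change _ + ((2 + algebraMap k L ζ) * _ + (1 + algebraMap k L ζ) * _ +
        -(m : L) * (algebraMap k L ζ - algebraMap k L ζ ^ 2)) = 0
      have hm' : (l : L) * p = 1 + 9 * m := by exact_mod_cast congrArg (Nat.cast (R := L)) hm
      rw [hm'] at hθ
      set z := algebraMap k L ζ
      set T := (θ - 1) / (1 - z) with hT
      have hT' : θ = 1 + (1 - z) * T := by rw [hT]; field_simp; ring
      rw [hT'] at hθ
      apply mul_left_cancel₀ (pow_ne_zero 3 h1ζ)
      have hz2 : z ^ 2 = -z - 1 := by linear_combination hwL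
      have e1 : (1 - z) ^ 3 * (2 + z) = 3 * (1 - z) ^ 2 := by
        linear_combination (-(1 - z) ^ 2) * hwL
      have e2 : (1 - z) ^ 3 * (1 + z) = 3 * (1 - z) := by
        linear_combination (1 - z) * (z - 2) * hwL
      have e3 : (1 - z) ^ 3 * (z - z ^ 2) = 9 := by
        linear_combination ((z ^ 3 - 5 * z ^ 2 + 10 * z - 9)) * hwL
      linear_combination hθ + T ^ 2 * e1 + T * e2 - m * e3
  have hpid := IsCyclotomicExtension.Rat.three_pid k
  have hinjO : Function.Injective (algebraMap (𝓞 k) (𝓞 L)) :=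
    FaithfulSMul.algebraMap_injective _ _
  have hsa : ∀ a : 𝓞 k, s (algebraMap (𝓞 k) (𝓞 L) a) = algebraMap (𝓞 k) (𝓞 L) a := by
    intro a
    ext
    exact σ.commutes (a : k)
  have hrank : Module.finrank ℤ (𝓞 L) = 6 := by rw [RingOfIntegers.rank, h6]
  have hθgen : ∀ x : 𝓞 L, (x : L) = θ → x ^ 3 = (l : 𝓞 L) * p := by
    intro x hx
    apply FaithfulSMul.algebraMap_injective (𝓞 L) L
    rw [map_pow, map_mul, map_natCast, map_natCast]
    have hx' : algebraMap (𝓞 L) L x = θ := hx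
    rw [hx', hθ]
  refine ⟨s, w, ⟨θ, hθi⟩, ⟨_, hti⟩, ?_⟩
  constructor
  · intro x
    ext
    exact hσ3 x
  · exact hwO
  · exact hsa w0
  · exact hθgen _ rfl
  · ext
    exact hσθ
  · apply RingOfIntegers.ext
    change (1 - algebraMap k L ζ) * ((θ - 1) / (1 - algebraMap k L ζ)) = θ - 1
    field_simp
  · exact hl
  · exact hp
  · exact hl9
  · exact hp9
  · exact hlp
  · intro J hJ hsJ
    obtain ⟨g0, hg0⟩ := (hpid.principal (J.comap (algebraMap (𝓞 k) (𝓞 L))))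
    have hdiv : ∀ x ∈ J, s x = x → algebraMap (𝓞 k) (𝓞 L) g0 ∣ x := by
      intro x hx hsx
      obtain ⟨a, rfl⟩ := hfixO x hsx
      have : a ∈ J.comap (algebraMap (𝓞 k) (𝓞 L)) := hx
      rw [hg0] at this
      exact map_dvd _ (Ideal.mem_span_singleton.mp this)
    refine ⟨algebraMap (𝓞 k) (𝓞 L) g0, ?_, hsa g0, ?_, hdiv⟩
    · intro h0
      have := hdiv _ (Ideal.absNorm_mem J) (map_natCast s _)
      rw [h0, zero_dvd_iff] at this
      have h2 : Ideal.absNorm J = 0 := by exact_mod_cast this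
      exact hJ (Ideal.absNorm_eq_zero_iff.mp h2)
    · have : g0 ∈ J.comap (algebraMap (𝓞 k) (𝓞 L)) := by
        rw [hg0]; exact Submodule.mem_span_singleton_self g0
      exact this
  · rintro _ ⟨u, rfl⟩ hu
    obtain ⟨a, ha⟩ := hfixO _ hu
    have hu' : s (↑u⁻¹ : 𝓞 L) = (↑u⁻¹ : 𝓞 L) := by
      apply mul_left_cancel₀ u.ne_zero
      nth_rewrite 1 [← hu]
      rw [← map_mul, Units.mul_inv, map_one]
    obtain ⟨b, hb⟩ := hfixO _ hu'
    have hab : a * b = 1 := by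
      apply hinjO
      rw [map_mul, ha, hb, map_one, Units.mul_inv]
    have hmem := IsCyclotomicExtension.Rat.Three.Units.mem hζ (Units.mkOfMulEqOne a b hab)
    rw [← ha]
    have hval : a = ((Units.mkOfMulEqOne a b hab : (𝓞 k)ˣ) : 𝓞 k) := rfl
    simp only [List.mem_cons, List.not_mem_nil, or_false] at hmem
    rw [hval]
    rcases hmem with h | h | h | h | h | h <;> rw [h]
    · exact ⟨0, by simp⟩
    · exact ⟨0, by simp⟩
    · exact ⟨1, Or.inl (by rw [pow_one]; rfl)⟩
    · exact ⟨1, Or.inr (by rw [pow_one, Units.val_neg, map_neg]; rfl)⟩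
    · exact ⟨2, Or.inl (by rw [Units.val_pow_eq_pow_val, map_pow]; rfl)⟩
    · exact ⟨2, Or.inr (by rw [Units.val_neg, map_neg, Units.val_pow_eq_pow_val, map_pow]; rfl)⟩
  · intro r
    rw [Ideal.absNorm_span_natCast, hrank]
  · exact exists_bigunit L h6 w (by linear_combination (w - 1) * hwO)

open NumberField IntermediateField in
theorem norm_descend (K L : Type*) [Field K] [NumberField K] [Field L] [NumberField L]
    [Algebra K L] (h3 : Module.finrank ℚ K = 3) (a : 𝓞 L) (r e : ℕ) (hr : r ≠ 0)
    (he : e % 3 ≠ 0) (ha : Ideal.absNorm (Ideal.span {a}) = r ^ e) :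
    ∃ x : K, Algebra.norm ℚ x = (r : ℚ) := by
  have hr0 : (r : ℚ) ≠ 0 := by exact_mod_cast hr
  rw [Ideal.absNorm_span_singleton] at ha
  have hn : Algebra.norm ℚ (Algebra.norm K (a : L)) = ((Algebra.norm ℤ a : ℤ) : ℚ) := by
    rw [Algebra.norm_norm, Algebra.coe_norm_int]
  have hneg : ∀ x : K, Algebra.norm ℚ (-x) = - Algebra.norm ℚ x := by
    intro x
    rw [show -x = algebraMap ℚ K (-1) * x by simp, map_mul, Algebra.norm_algebraMap, h3]
    norm_num
  obtain ⟨y, hy⟩ : ∃ y : K, Algebra.norm ℚ y = (r : ℚ) ^ e := by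
    rcases Int.natAbs_eq (Algebra.norm ℤ a) with h | h
    · exact ⟨_, by rw [hn, h, ha]; push_cast; rfl⟩
    · exact ⟨- Algebra.norm K (a : L), by rw [hneg, hn, h, ha]; push_cast; ring⟩
  have hrn : ∀ c : ℤ, Algebra.norm ℚ ((r : K) ^ c) = (r : ℚ) ^ (3 * c) := by
    intro c
    rw [show (r : K) ^ c = algebraMap ℚ K ((r : ℚ) ^ c) by simp, Algebra.norm_algebraMap, h3,
      ← zpow_natCast, ← zpow_mul, mul_comm]
    rfl
  obtain ⟨c, hc | hc⟩ : ∃ c, e = 3 * c + 1 ∨ e = 3 * c + 2 := ⟨e / 3, by omega⟩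
  · refine ⟨y * (r : K) ^ (-(c : ℤ)), ?_⟩
    rw [map_mul, hy, hrn, ← zpow_natCast, ← zpow_add₀ hr0, hc]
    push_cast
    rw [show (3 * (c : ℤ) + 1 + 3 * -c) = 1 by ring, zpow_one]
  · refine ⟨y ^ 2 * (r : K) ^ (-(2 * c + 1 : ℤ)), ?_⟩
    rw [map_mul, map_pow, hy, hrn, ← pow_mul, ← zpow_natCast, ← zpow_add₀ hr0, hc]
    push_cast
    rw [show ((3 * (c : ℤ) + 2) * 2 + 3 * -(2 * c + 1)) = 1 by ring, zpow_one]

/-- Let `ℓ, p, q` be distinct primes with `q ≡ 8 (mod 9)` and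
`{ℓ mod 9, p mod 9} = {2, 5}`, and let `K = ℚ(β)` be the cubic field with
`β³ = ℓ²/p`. Then some `ε ∈ K` has `Norm_{K/ℚ}(ε) = pq`. -/
theorem stmt_16 (ℓ p q : ℕ) (hℓ : ℓ.Prime) (hp : p.Prime) (hq : q.Prime)
    (hℓp : ℓ ≠ p) (hℓq : ℓ ≠ q) (hpq : p ≠ q) (hq9 : q % 9 = 8)
    (h9 : (ℓ % 9 = 2 ∧ p % 9 = 5) ∨ (ℓ % 9 = 5 ∧ p % 9 = 2))
    (K : Type*) [Field K] [NumberField K] (β : K)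
    (hβ : β ^ 3 = (ℓ : K) ^ 2 / (p : K))
    (hrank : Module.finrank ℚ K = 3) :
    ∃ ε : K, Algebra.norm ℚ ε = (p : ℚ) * q := by
  have hℓ0 : (ℓ : K) ≠ 0 := by exact_mod_cast hℓ.ne_zero
  have hp0 : (p : K) ≠ 0 := by exact_mod_cast hp.ne_zero
  have : NumberField (CyclotomicField 3 K) := IsCyclotomicExtension.numberField {3} K _
  let L := CyclotomicField 3 K
  let z : L := IsCyclotomicExtension.zeta 3 K L
  have hz : IsPrimitiveRoot z 3 := IsCyclotomicExtension.zeta_spec 3 K L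
  let k := IntermediateField.adjoin ℚ {z}
  have hkc : IsCyclotomicExtension {3} ℚ k := hz.intermediateField_adjoin_isCyclotomicExtension ℚ
  have hk : Module.finrank ℚ k = 2 := by
    rw [IsCyclotomicExtension.finrank (n := 3) k
      (Polynomial.cyclotomic.irreducible_rat (by norm_num))]
    decide
  have hKL : Module.finrank K L ≤ 2 := by
    rw [(hz.powerBasis K).finrank, IsPrimitiveRoot.powerBasis_dim]
    have h1 : (Polynomial.cyclotomic 3 K).natDegree = 2 := by
      rw [Polynomial.natDegree_cyclotomic]; decide
    rw [← h1]
    apply Polynomial.natDegree_le_of_dvd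
    · apply minpoly.dvd
      rw [Polynomial.aeval_def, Polynomial.eval₂_eq_eval_map, Polynomial.map_cyclotomic]
      exact hz.isRoot_cyclotomic (by norm_num)
    · exact Polynomial.cyclotomic_ne_zero 3 K
  have hkL : Module.finrank k L = 3 := by
    have h1 := Module.finrank_mul_finrank ℚ k L
    have h2 := Module.finrank_mul_finrank ℚ K L
    have h3 : 0 < Module.finrank K L := Module.finrank_pos
    rw [hk] at h1
    rw [hrank] at h2
    omega
  let ζ : k := ⟨z, IntermediateField.mem_adjoin_simple_self ℚ z⟩
  have hζ : IsPrimitiveRoot ζ 3 := by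
    refine IsPrimitiveRoot.of_map_of_injective (f := algebraMap k L) ?_ (algebraMap k L).injective
    exact hz
  have hθ : ((p : K) * β ^ 2 / ℓ) ^ 3 = (ℓ : K) * p := by
    rw [div_pow, mul_pow, ← pow_mul, mul_comm 2 3, pow_mul, hβ]
    field_simp
  obtain ⟨s, w, θ, t, S⟩ := build k L hk hkL ζ hζ ℓ p (algebraMap K L ((p : K) * β ^ 2 / ℓ))
    (by rw [← map_pow, hθ]; simp) hℓ hp (by omega) (by omega) hℓp (by
      rcases h9 with h | h <;> rw [Nat.mul_mod, h.1, h.2])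
  obtain ⟨a, ha⟩ := S.exists_p
  obtain ⟨b, h, hh, hb⟩ := S.exists_q q hq (by omega) hℓq hpq
  obtain ⟨x, hx⟩ := norm_descend K L hrank a p 2 hp.ne_zero (by norm_num) ha
  obtain ⟨y, hy⟩ := norm_descend K L hrank b q (2 * h) hq.ne_zero (by omega) hb
  exact ⟨x * y, by rw [map_mul, hx, hy]⟩
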